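/- If X and Y are irreducible sofic shifts with Fischer covers 𝒢_X = (G_X, ℒ_X) and 𝒢_Y = (G_Y, ℒ_Y) such that the underlying graphs G_X and G_Y are graph isomorphic, then X and Y are right-resolving almost conjugate; a common SFT extension is the edge shift X_{G_X} with legs (ℒ_X)_∞ and (ℒ_Y)_∞ composed with the graph isomorphism. -/

import Mathlib

/-! ## Basic symbolic dynamics over `ℤ` -/

/-- The shift map on bi-infinite sequences. -/
def shiftMap {A : Type} (x : ℤ → A) : ℤ → A := fun i => x (i + 1)

/-- The word `w` occurs in `x` starting at coordinate `i`. -/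
def occursAt {A : Type} (w : List A) (x : ℤ → A) (i : ℤ) : Prop :=
  ∀ (k : ℕ) (h : k < w.length), x (i + k) = w.get ⟨k, h⟩

/-- The word `w` occurs somewhere in `x`. -/
def occursIn {A : Type} (w : List A) (x : ℤ → A) : Prop := ∃ i : ℤ, occursAt w x i

/-- The word `w` belongs to the language of `X`. -/
def InLang {A : Type} (X : Set (ℤ → A)) (w : List A) : Prop := ∃ x ∈ X, occursIn w x

/-- `X` is a subshift: it is defined by a set of forbidden words. -/
def IsSubshift {A : Type} (X : Set (ℤ → A)) : Prop :=
  ∃ F : Set (List A), X = { x | ∀ w ∈ F, ¬ occursIn w x }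

/-- `X` is a shift of finite type: defined by a finite set of forbidden words. -/
def IsSFT {A : Type} (X : Set (ℤ → A)) : Prop :=
  ∃ F : Finset (List A), X = { x | ∀ w ∈ F, ¬ occursIn w x }

/-- `φ` is a sliding block code on `X` (with some memory `m` and anticipation `n`). -/
def IsSliding {A B : Type} (X : Set (ℤ → A)) (φ : (ℤ → A) → ℤ → B) : Prop :=
  ∃ m n : ℕ, ∀ x ∈ X, ∀ y ∈ X, ∀ i : ℤ,
    (∀ j : ℤ, i - (m : ℤ) ≤ j → j ≤ i + (n : ℤ) → x j = y j) → φ x i = φ y i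

/-- `φ` is a factor code from `X` onto `Y`. -/
def IsFactorCode {A B : Type} (X : Set (ℤ → A)) (Y : Set (ℤ → B))
    (φ : (ℤ → A) → ℤ → B) : Prop :=
  IsSliding X φ ∧ (∀ x ∈ X, φ x ∈ Y) ∧ (∀ y ∈ Y, ∃ x ∈ X, φ x = y) ∧
    (∀ x ∈ X, φ (shiftMap x) = shiftMap (φ x))

/-- `X` and `Y` are topologically conjugate (via mutually inverse sliding block codes). -/
def TopConjugate {A B : Type} (X : Set (ℤ → A)) (Y : Set (ℤ → B)) : Prop :=
  ∃ (φ : (ℤ → A) → ℤ → B) (ψ : (ℤ → B) → ℤ → A),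
    IsFactorCode X Y φ ∧ IsFactorCode Y X ψ ∧
    (∀ x ∈ X, ψ (φ x) = x) ∧ (∀ y ∈ Y, φ (ψ y) = y)

/-- `φ` is a right-resolving (1-block) code on `X`: it is induced by a symbol map `Φ`
such that whenever `ab` and `ac` are 2-blocks of `X` with `Φ b = Φ c`, then `b = c`. -/
def IsRightResolvingCode {A B : Type} (X : Set (ℤ → A)) (φ : (ℤ → A) → ℤ → B) : Prop :=
  ∃ Φ : A → B, (∀ x ∈ X, ∀ i : ℤ, φ x i = Φ (x i)) ∧
    ∀ a b c : A, InLang X [a, b] → InLang X [a, c] → Φ b = Φ c → b = c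

/-- `x` is a doubly transitive point of `X`. -/
def DoublyTransitive {A : Type} (X : Set (ℤ → A)) (x : ℤ → A) : Prop :=
  ∀ w : List A, InLang X w →
    (∀ N : ℤ, ∃ i ≥ N, occursAt w x i) ∧ (∀ N : ℤ, ∃ i ≤ N, occursAt w x i)

/-- `φ : W → Y` is one-to-one almost everywhere: every doubly transitive point of `Y`
has exactly one preimage in `W`. -/
def OneOneAE {A B : Type} (W : Set (ℤ → A)) (Y : Set (ℤ → B))
    (φ : (ℤ → A) → ℤ → B) : Prop :=
  ∀ y ∈ Y, DoublyTransitive Y y → ∃! x, x ∈ W ∧ φ x = y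

/-- `φ` is finite-to-one on `W` (uniformly bounded fibers). -/
def FiniteToOne {A B : Type} (W : Set (ℤ → A)) (φ : (ℤ → A) → ℤ → B) : Prop :=
  ∃ M : ℕ, ∀ y : ℤ → B, { x ∈ W | φ x = y }.Finite ∧ { x ∈ W | φ x = y }.ncard ≤ M

/-- `X` and `Y` are right-resolving almost conjugate. -/
def RRAlmostConjugate {A B : Type} (X : Set (ℤ → A)) (Y : Set (ℤ → B)) : Prop :=
  ∃ (C : Type) (_ : Finite C) (W : Set (ℤ → C))
    (φX : (ℤ → C) → ℤ → A) (φY : (ℤ → C) → ℤ → B),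
    IsSFT W ∧ IsFactorCode W X φX ∧ IsFactorCode W Y φY ∧
    IsRightResolvingCode W φX ∧ IsRightResolvingCode W φY ∧
    OneOneAE W X φX ∧ OneOneAE W Y φY

/-- `X` and `Y` are right-resolving finitely equivalent. -/
def RRFinEquiv {A B : Type} (X : Set (ℤ → A)) (Y : Set (ℤ → B)) : Prop :=
  ∃ (C : Type) (_ : Finite C) (W : Set (ℤ → C))
    (φX : (ℤ → C) → ℤ → A) (φY : (ℤ → C) → ℤ → B),
    IsSFT W ∧ IsFactorCode W X φX ∧ IsFactorCode W Y φY ∧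
    IsRightResolvingCode W φX ∧ IsRightResolvingCode W φY ∧
    FiniteToOne W φX ∧ FiniteToOne W φY

/-- An irreducible shift space. -/
def IrreducibleShift {A : Type} (X : Set (ℤ → A)) : Prop :=
  ∀ u w : List A, InLang X u → InLang X w → ∃ v : List A, InLang X (u ++ v ++ w)

/-- `v` is a synchronizing word for `X`. -/
def SynchronizingWord {A : Type} (X : Set (ℤ → A)) (v : List A) : Prop :=
  InLang X v ∧ ∀ u w : List A, InLang X (u ++ v) → InLang X (v ++ w) →
    InLang X (u ++ v ++ w)

/-- A synchronized system: an irreducible subshift with a synchronizing word. -/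
def Synchronized {A : Type} (X : Set (ℤ → A)) : Prop :=
  IsSubshift X ∧ IrreducibleShift X ∧ ∃ v : List A, SynchronizingWord X v

/-! ## S-gap shifts and β-shifts -/

/-- The S-gap shift `X(S)` for `S ⊆ ℕ ∪ {0}`: numbers of `0`s between successive `1`s
lie in `S`; `1`s occur infinitely often in both directions unless `S` is infinite. -/
def SGap (S : Set ℕ) : Set (ℤ → Fin 2) :=
  { x | (∀ i j : ℤ, i < j → x i = 1 → x j = 1 →
          (∀ k : ℤ, i < k → k < j → x k = 0) → (j - i - 1).toNat ∈ S) ∧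
        (S.Finite → (∀ N : ℤ, ∃ i ≥ N, x i = 1) ∧ (∀ N : ℤ, ∃ i ≤ N, x i = 1)) }

/-- Remainders of the (greedy) β-expansion of `1` with digits in `{0,1}`:
`betaRem β n = 1 - Σ_{i ≤ n} a_i β^{-i}`. -/
noncomputable def betaRem (β : ℝ) : ℕ → ℝ
  | 0 => 1
  | n + 1 => betaRem β n - (if β⁻¹ ^ (n + 1) ≤ betaRem β n then β⁻¹ ^ (n + 1) else 0)

/-- The digit `a_{n+1}` of the β-expansion `1_β = a_1 a_2 a_3 ⋯` of `1`. -/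
noncomputable def betaDigit (β : ℝ) (n : ℕ) : Fin 2 :=
  if β⁻¹ ^ (n + 1) ≤ betaRem β n then 1 else 0

/-- Lexicographic order on one-sided sequences. -/
def lexLE {A : Type} [LinearOrder A] (u v : ℕ → A) : Prop :=
  u = v ∨ ∃ n : ℕ, (∀ k < n, u k = v k) ∧ u n < v n

/-- The β-shift: `x ∈ X_β` iff every right tail of `x` is lexicographically `≤ 1_β`. -/
def betaShift (β : ℝ) : Set (ℤ → Fin 2) :=
  { x | ∀ i : ℤ, lexLE (fun n : ℕ => x (i + (n : ℤ))) (betaDigit β) }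

/-- The set `S = {i - 1 : a_i = 1}` of the associated S-gap shift `ASS(X_β) = X(S)`. -/
def assocS (β : ℝ) : Set ℕ := { n | betaDigit β n = 1 }

/-- Eventual periodicity of a sequence. -/
def EvPeriodic {α : Type} (a : ℕ → α) : Prop :=
  ∃ p : ℕ, 0 < p ∧ ∃ N : ℕ, ∀ n ≥ N, a (n + p) = a n

/-! ## Finite directed multigraphs, edge shifts, labeled graphs -/

structure FinGraph where
  V : Type
  E : Type
  [fintypeV : Fintype V]
  [fintypeE : Fintype E]
  src : E → V
  tgt : E → V

attribute [instance] FinGraph.fintypeV FinGraph.fintypeE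

/-- The edge shift of a graph. -/
def FinGraph.edgeShift (G : FinGraph) : Set (ℤ → G.E) :=
  { ξ | ∀ i : ℤ, G.tgt (ξ i) = G.src (ξ (i + 1)) }

structure GraphHom (G H : FinGraph) where
  vmap : G.V → H.V
  emap : G.E → H.E
  src_eq : ∀ e : G.E, H.src (emap e) = vmap (G.src e)
  tgt_eq : ∀ e : G.E, H.tgt (emap e) = vmap (G.tgt e)

structure GraphIso (G H : FinGraph) where
  vmap : G.V ≃ H.V
  emap : G.E ≃ H.E
  src_eq : ∀ e : G.E, H.src (emap e) = vmap (G.src e)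
  tgt_eq : ∀ e : G.E, H.tgt (emap e) = vmap (G.tgt e)

/-- `H ⪯ G` : the edge shift `X_H` is a right-resolving factor of `X_G`,
via a graph homomorphism whose restriction to each out-edge set is injective. -/
def RRFactorOf (H G : FinGraph) : Prop :=
  ∃ Φ : GraphHom G H,
    (∀ η ∈ H.edgeShift, ∃ ξ ∈ G.edgeShift, ∀ i : ℤ, Φ.emap (ξ i) = η i) ∧
    ∀ I : G.V, Set.InjOn Φ.emap { e : G.E | G.src e = I }

/-- `M` is the minimal right-resolving factor graph `M_G` of `G`: it is the smallest
element in the order `⪯` on graphs right-resolving-factoring from `G`. -/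
def IsMinFactorGraph (M G : FinGraph) : Prop :=
  RRFactorOf M G ∧ ∀ H : FinGraph, RRFactorOf H G → RRFactorOf M H

/-- The nested sequence of equivalence relations `∼ₙ` on vertices of `G` whose limiting
partition gives the states of `M_G`. -/
def simRel (G : FinGraph) : ℕ → G.V → G.V → Prop
  | 0, _, _ => True
  | n + 1, I, J => ∀ K : G.V,
      { e : G.E | G.src e = I ∧ simRel G n (G.tgt e) K }.ncard =
      { e : G.E | G.src e = J ∧ simRel G n (G.tgt e) K }.ncard

/-- The limiting equivalence relation; its classes are the states of `M_G`. -/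
def simLim (G : FinGraph) (I J : G.V) : Prop := ∀ n : ℕ, simRel G n I J

/-- A labeled graph over the alphabet `A`. -/
structure LGraph (A : Type) where
  G : FinGraph
  label : G.E → A

def LGraph.RightResolving {A : Type} (𝒢 : LGraph A) : Prop :=
  ∀ e f : 𝒢.G.E, 𝒢.G.src e = 𝒢.G.src f → 𝒢.label e = 𝒢.label f → e = f

/-- `𝒢` presents the shift space `X`: `X = ℒ_∞(X_G)`. -/
def LGraph.Presents {A : Type} (𝒢 : LGraph A) (X : Set (ℤ → A)) : Prop :=
  X = { x | ∃ ξ ∈ 𝒢.G.edgeShift, ∀ i : ℤ, 𝒢.label (ξ i) = x i }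

def FinGraph.Irreducible (G : FinGraph) : Prop :=
  ∀ I J : G.V, Relation.ReflTransGen (fun u v => ∃ e : G.E, G.src e = u ∧ G.tgt e = v) I J

/-- A sofic shift: one presented by a finite labeled graph. -/
def IsSofic {A : Type} (X : Set (ℤ → A)) : Prop := ∃ 𝒢 : LGraph A, 𝒢.Presents X

/-- The Fischer cover: the minimal right-resolving presentation of an irreducible
sofic shift. -/
def IsFischerCover {A : Type} (𝒢 : LGraph A) (X : Set (ℤ → A)) : Prop :=
  𝒢.G.Irreducible ∧ 𝒢.RightResolving ∧ 𝒢.Presents X ∧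
    ∀ ℋ : LGraph A, ℋ.RightResolving → ℋ.Presents X →
      Fintype.card 𝒢.G.V ≤ Fintype.card ℋ.G.V

/-! ## Countable labeled graphs (for almost Markov systems) -/

structure CtblLGraph (A : Type) where
  V : Type
  E : Type
  ctblV : Countable V
  ctblE : Countable E
  src : E → V
  tgt : E → V
  label : E → A

def CtblLGraph.RightResolving {A : Type} (𝒢 : CtblLGraph A) : Prop :=
  ∀ e f : 𝒢.E, 𝒢.src e = 𝒢.src f → 𝒢.label e = 𝒢.label f → e = f

def CtblLGraph.Irreducible {A : Type} (𝒢 : CtblLGraph A) : Prop :=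
  ∀ I J : 𝒢.V, Relation.ReflTransGen (fun u v => ∃ e : 𝒢.E, 𝒢.src e = u ∧ 𝒢.tgt e = v) I J

/-- `w` is the label of some finite path in `𝒢`. -/
def CtblLGraph.IsPathLabel {A : Type} (𝒢 : CtblLGraph A) (w : List A) : Prop :=
  ∃ es : List 𝒢.E, es.map 𝒢.label = w ∧ es.Chain' (fun e f => 𝒢.tgt e = 𝒢.src f)

/-- `𝒢` presents `X` (on the level of languages). -/
def CtblLGraph.PresentsLang {A : Type} (𝒢 : CtblLGraph A) (X : Set (ℤ → A)) : Prop :=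
  ∀ w : List A, InLang X w ↔ 𝒢.IsPathLabel w

/-- An almost Markov system: it has a right-resolving presentation by a countable
irreducible labeled graph. -/
def AlmostMarkov {A : Type} (X : Set (ℤ → A)) : Prop :=
  ∃ 𝒢 : CtblLGraph A, 𝒢.RightResolving ∧ 𝒢.Irreducible ∧ 𝒢.PresentsLang X

/-! ## Words `𝒟(S)`, primitivity -/

/-- The word `𝒟(S) = d_1 d_2 ⋯ d_{k-2} (d_{k-1} + s_0 + 1)` for `S = {s_0 < ⋯ < s_{k-1}}`
enumerated by `s`. -/
def DSword (k : ℕ) (s : ℕ → ℕ) : List ℕ :=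
  (List.range (k - 1)).map fun i =>
    if i + 2 < k then s (i + 1) - s i else s (i + 1) - s i + s 0 + 1

/-- The word `𝒟(S)` of a finite set `S = {s_0 < s_1 < ⋯ < s_{k-1}}` of naturals. -/
def gapWord (F : Finset ℕ) : List ℕ :=
  let l := F.sort (· ≤ ·)
  (List.range (l.length - 1)).map fun i =>
    if i + 2 < l.length then l.getD (i + 1) 0 - l.getD i 0
    else l.getD (i + 1) 0 - l.getD i 0 + l.getD 0 0 + 1

/-- `q` is a period of the word `w` (in the sense `w = u^{|w|/q}` with `|u| = q`). -/
def ListPeriod (w : List ℕ) (q : ℕ) : Prop :=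
  0 < q ∧ q ∣ w.length ∧ ∀ i : ℕ, i + q < w.length → w.getD i 0 = w.getD (i + q) 0

/-- A word is primitive if its least period equals its length. -/
def ListPrimitive (w : List ℕ) : Prop := ∀ q : ℕ, ListPeriod w q → q = w.length

/-! ## Entropy, periodic points and zeta functions -/

/-- The number of words of length `n` in the language of `X`. -/
noncomputable def wordCount {A : Type} (X : Set (ℤ → A)) (n : ℕ) : ℕ :=
  { w : List A | w.length = n ∧ InLang X w }.ncard

/-- `X` has topological entropy `h`, i.e. `(1/n) log |ℬ_n(X)| → h`. -/
def HasEntropy {A : Type} (X : Set (ℤ → A)) (h : ℝ) : Prop :=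
  Filter.Tendsto (fun n : ℕ => Real.log (wordCount X n) / n) Filter.atTop (nhds h)

/-- The topological entropy of `X`. -/
noncomputable def entropy {A : Type} (X : Set (ℤ → A)) : ℝ :=
  Filter.atTop.limsup fun n : ℕ => Real.log (wordCount X n) / n

/-- The set of points of `X` of period `n`. -/
def perPts {A : Type} (X : Set (ℤ → A)) (n : ℕ) : Set (ℤ → A) :=
  { x ∈ X | shiftMap^[n] x = x }

/-- `p_n`, the number of points of period `n`. -/
noncomputable def pcount {A : Type} (X : Set (ℤ → A)) (n : ℕ) : ℕ := (perPts X n).ncard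

/-- The exponential of a formal power series (intended for zero constant term). -/
noncomputable def expPS (g : PowerSeries ℚ) : PowerSeries ℚ :=
  PowerSeries.mk fun n =>
    ∑ k ∈ Finset.range (n + 1), (PowerSeries.coeff n (g ^ k)) / (Nat.factorial k : ℚ)

/-- The Artin–Mazur zeta function `ζ_σ(t) = exp (Σ_{n ≥ 1} (p_n / n) tⁿ)` of `X`. -/
noncomputable def zetaPS {A : Type} (X : Set (ℤ → A)) : PowerSeries ℚ :=
  expPS (PowerSeries.mk fun n => if n = 0 then 0 else (pcount X n : ℚ) / (n : ℚ))

/-! ## Continued fractions parametrization of S-gap shifts -/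

/-- The value of a finite continued fraction `[a_0; a_1, …, a_n]`. -/
def cfVal : List ℕ → ℚ
  | [] => 0
  | [a] => (a : ℚ)
  | a :: rest => (a : ℚ) + 1 / cfVal rest

/-- The sequence `d_0 = s_0`, `d_n = s_n - s_{n-1}` of gap differences of `S`. -/
noncomputable def dSeq (S : Set ℕ) (n : ℕ) : ℕ :=
  if n = 0 then Nat.nth (· ∈ S) 0 else Nat.nth (· ∈ S) n - Nat.nth (· ∈ S) (n - 1)

open scoped Classical in
/-- The real number `x_S = [d_0; d_1, d_2, …]` assigned to the S-gap shift `X(S)`. -/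
noncomputable def xOf (S : Set ℕ) : ℝ :=
  if hS : S.Finite then ((cfVal ((List.range hS.toFinset.card).map (dSeq S)) : ℚ) : ℝ)
  else Filter.atTop.limsup fun n : ℕ =>
    ((cfVal ((List.range (n + 1)).map (dSeq S)) : ℚ) : ℝ)

/-! Pulling the labeling of `G_Y` back along the graph isomorphism gives a Fischer cover of `Y` on
the graph `G_X`, so everything reduces to one fact: the label map of a Fischer cover is one-to-one
almost everywhere.

Identifying vertices with the same follower set yields a right-resolving presentation of the same
shift, since a sofic shift is determined by its language (compactness); by minimality nothing is
identified. Extending a word so as to kill terminal vertices one by one then produces a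
synchronizing word, all of whose paths end at the same vertex. In a doubly transitive point this
word occurs arbitrarily far to the left, and right-resolution forces any two lifts to agree from
there on. -/

/-! ## Words and languages of subshifts -/

section Words

variable {A : Type}

@[simp]
theorem occursAt_nil (x : ℤ → A) (i : ℤ) : occursAt [] x i := nofun

@[simp]
theorem occursAt_cons {a : A} {w : List A} {x : ℤ → A} {i : ℤ} :
    occursAt (a :: w) x i ↔ x i = a ∧ occursAt w x (i + 1) := by
  have succ_index (k : ℕ) : i + (k + 1 : ℕ) = i + 1 + k := by push_cast; ring
  constructor
  · exact fun h ↦ ⟨by simpa using h 0 (by simp),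
      fun k hk ↦ succ_index k ▸ h (k + 1) (by simpa using hk)⟩
  · rintro ⟨h_head, h_tail⟩ (_ | k) hk
    · simpa using h_head
    · exact succ_index k ▸ h_tail k (by simpa using hk)

theorem occursAt_ofFn {x y : ℤ → A} {i j : ℤ} {n : ℕ} :
    occursAt (List.ofFn fun k : Fin n ↦ x (i + k)) y j ↔ ∀ k < n, y (j + k) = x (i + k) := by
  simp [occursAt]

theorem IsSubshift.mem_iff {X : Set (ℤ → A)} (hX : IsSubshift X) {x : ℤ → A} :
    x ∈ X ↔ ∀ w, occursIn w x → InLang X w := by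
  refine ⟨fun hx w hw ↦ ⟨x, hx, hw⟩, fun h ↦ ?_⟩
  obtain ⟨F, rfl⟩ := hX
  intro w hwF hwx
  obtain ⟨y, hy, hwy⟩ := h w hwx
  exact hy w hwF hwy

theorem IsSubshift.eq_of_inLang_iff {X Y : Set (ℤ → A)} (hX : IsSubshift X) (hY : IsSubshift Y)
    (h : ∀ w, InLang X w ↔ InLang Y w) : X = Y := by
  ext x
  simp only [hX.mem_iff, hY.mem_iff, h]

end Words

/-! ## Edge shifts -/

namespace FinGraph

variable {G : FinGraph}

/-- A graph is essential if it has no sources and no sinks: every vertex is the initial vertex of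
some edge and the terminal vertex of some edge. -/
def Essential (G : FinGraph) : Prop :=
  Function.Surjective G.src ∧ Function.Surjective G.tgt

theorem Irreducible.essential [Nonempty G.E] (hG : G.Irreducible) : G.Essential := by
  obtain ⟨e₀⟩ := ‹Nonempty G.E›
  constructor
  · intro v
    obtain h | ⟨-, ⟨e, he, -⟩, -⟩ := (hG v (G.src e₀)).cases_head
    · exact ⟨e₀, h.symm⟩
    · exact ⟨e, he⟩
  · intro v
    obtain h | ⟨-, -, ⟨e, -, he⟩⟩ := (hG (G.tgt e₀) v).cases_tail
    · exact ⟨e₀, h.symm⟩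
    · exact ⟨e, he⟩

theorem comp_add_mem_edgeShift {ξ : ℤ → G.E} (hξ : ξ ∈ G.edgeShift) (k : ℤ) :
    (fun i ↦ ξ (i + k)) ∈ G.edgeShift := fun i ↦ by
  simpa only [add_right_comm] using hξ (i + k)

theorem splice_mem_edgeShift {ξ η : ℤ → G.E} (hξ : ξ ∈ G.edgeShift) (hη : η ∈ G.edgeShift)
    (h : G.tgt (ξ 0) = G.src (η 1)) : (fun i ↦ if i ≤ 0 then ξ i else η i) ∈ G.edgeShift := by
  intro i
  dsimp only
  obtain hi | rfl | hi := lt_trichotomy i 0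
  · rw [if_pos hi.le, if_pos (by lia)]
    exact hξ i
  · simpa using h
  · rw [if_neg hi.not_ge, if_neg (by lia)]
    exact hη i

theorem Essential.exists_mem_edgeShift_apply_zero (hG : G.Essential) (e : G.E) :
    ∃ ξ ∈ G.edgeShift, ξ 0 = e := by
  choose next h_next using fun e ↦ hG.1 (G.tgt e)
  choose prev h_prev using fun e ↦ hG.2 (G.src e)
  refine ⟨fun | .ofNat k => next^[k] e | .negSucc k => prev^[k + 1] e, ?_, rfl⟩
  rintro (k | _ | k)
  · change G.tgt (next^[k] e) = G.src (next^[k + 1] e)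
    rw [Function.iterate_succ_apply', h_next]
  · exact h_prev e
  · change G.tgt (prev^[k + 2] e) = G.src (prev^[k + 1] e)
    rw [Function.iterate_succ_apply' prev (k + 1), h_prev]

theorem isSFT_edgeShift (G : FinGraph) : IsSFT G.edgeShift := by
  classical
  refine ⟨{p : G.E × G.E | G.tgt p.1 ≠ G.src p.2}.toFinset.image fun p ↦ [p.1, p.2], ?_⟩
  ext ξ
  simp only [Finset.mem_image, Set.mem_toFinset, Prod.exists]
  constructor
  · rintro hξ _ ⟨a, b, hab, rfl⟩ ⟨i, hi⟩
    obtain ⟨rfl, rfl, -⟩ : ξ i = a ∧ ξ (i + 1) = b ∧ _ := by simpa only [occursAt_cons] using hi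
    exact hab (hξ i)
  · intro h i
    by_contra h_ne
    exact h _ ⟨ξ i, ξ (i + 1), h_ne, rfl⟩ ⟨i, by simp⟩

theorem tgt_eq_src_of_inLang_edgeShift {a b : G.E} (h : InLang G.edgeShift [a, b]) :
    G.tgt a = G.src b := by
  obtain ⟨ξ, hξ, i, hi⟩ := h
  obtain ⟨rfl, rfl, -⟩ : ξ i = a ∧ ξ (i + 1) = b ∧ _ := by simpa only [occursAt_cons] using hi
  exact hξ i

end FinGraph

/-! ## Codes induced by labelings -/

namespace LGraph

variable {A : Type} {𝒢 : LGraph A} {X : Set (ℤ → A)}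

theorem Presents.mem_iff (hP : 𝒢.Presents X) {x : ℤ → A} :
    x ∈ X ↔ ∃ ξ ∈ 𝒢.G.edgeShift, (fun i ↦ 𝒢.label (ξ i)) = x := by
  rw [hP]
  simp only [Set.mem_ofPred_eq, funext_iff]

theorem Presents.isFactorCode (hP : 𝒢.Presents X) :
    IsFactorCode 𝒢.G.edgeShift X (fun ξ i ↦ 𝒢.label (ξ i)) :=
  ⟨⟨0, 0, fun _ _ _ _ i h ↦ congrArg 𝒢.label (h i (by simp) (by simp))⟩,
    fun ξ hξ ↦ hP.mem_iff.2 ⟨ξ, hξ, rfl⟩, fun _ hy ↦ hP.mem_iff.1 hy, fun _ _ ↦ rfl⟩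

theorem RightResolving.isRightResolvingCode (hR : 𝒢.RightResolving) :
    IsRightResolvingCode 𝒢.G.edgeShift (fun ξ i ↦ 𝒢.label (ξ i)) := by
  refine ⟨𝒢.label, fun _ _ _ ↦ rfl, fun a b c hab hac h_label ↦ hR b c ?_ h_label⟩
  rw [← FinGraph.tgt_eq_src_of_inLang_edgeShift hab, FinGraph.tgt_eq_src_of_inLang_edgeShift hac]

theorem RightResolving.eq_of_src_eq (hR : 𝒢.RightResolving) {ξ η : ℤ → 𝒢.G.E}
    (hξ : ξ ∈ 𝒢.G.edgeShift) (hη : η ∈ 𝒢.G.edgeShift) {j : ℤ}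
    (h_src : 𝒢.G.src (ξ j) = 𝒢.G.src (η j))
    (h_label : ∀ k ≥ j, 𝒢.label (ξ k) = 𝒢.label (η k)) : ∀ k ≥ j, ξ k = η k := by
  intro k hk
  induction k, hk using Int.leInduction with
  | base => exact hR _ _ h_src (h_label j le_rfl)
  | succ k hk ih => exact hR _ _ (by rw [← hξ k, ← hη k, ih]) (h_label _ (by lia))

/-! ## Sofic shifts are subshifts -/

theorem exists_mem_edgeShift_of_forall_window {x : ℤ → A}
    (h : ∀ n : ℕ, ∃ ξ ∈ 𝒢.G.edgeShift, ∀ i : ℤ, |i| ≤ n → 𝒢.label (ξ i) = x i) :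
    ∃ ξ ∈ 𝒢.G.edgeShift, ∀ i : ℤ, 𝒢.label (ξ i) = x i := by
  let : TopologicalSpace 𝒢.G.E := ⊥
  have : DiscreteTopology 𝒢.G.E := ⟨rfl⟩
  have isClosed_edge (i : ℤ) :
      IsClosed {ξ : ℤ → 𝒢.G.E | 𝒢.G.tgt (ξ i) = 𝒢.G.src (ξ (i + 1))} :=
    (isClosed_discrete {p : 𝒢.G.E × 𝒢.G.E | 𝒢.G.tgt p.1 = 𝒢.G.src p.2}).preimage
      (f := fun ξ : ℤ → 𝒢.G.E ↦ (ξ i, ξ (i + 1))) (by fun_prop)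
  have isClosed_label (i : ℤ) : IsClosed {ξ : ℤ → 𝒢.G.E | 𝒢.label (ξ i) = x i} :=
    (isClosed_discrete {e | 𝒢.label e = x i}).preimage
      (f := fun ξ : ℤ → 𝒢.G.E ↦ ξ i) (continuous_apply i)
  let K (n : ℕ) : Set (ℤ → 𝒢.G.E) :=
    {ξ | ξ ∈ 𝒢.G.edgeShift ∧ ∀ i : ℤ, |i| ≤ n → 𝒢.label (ξ i) = x i}
  have isClosed_K (n : ℕ) : IsClosed (K n) := by
    have : K n = (⋂ i, {ξ | 𝒢.G.tgt (ξ i) = 𝒢.G.src (ξ (i + 1))}) ∩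
        ⋂ (i : ℤ) (_ : |i| ≤ n), {ξ | 𝒢.label (ξ i) = x i} := by
      ext ξ; simp [K, FinGraph.edgeShift]
    rw [this]
    exact (isClosed_iInter isClosed_edge).inter (isClosed_biInter fun i _ ↦ isClosed_label i)
  obtain ⟨ξ, hξ⟩ := IsCompact.nonempty_iInter_of_sequence_nonempty_isCompact_isClosed K
    (fun n ξ hξ ↦ ⟨hξ.1, fun i hi ↦ hξ.2 i (by push_cast; lia)⟩) h
    (isClosed_K 0).isCompact isClosed_K
  rw [Set.mem_iInter] at hξ
  exact ⟨ξ, (hξ 0).1, fun i ↦ (hξ i.natAbs).2 i (by simp)⟩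

end LGraph

theorem IsSofic.isSubshift {A : Type} {X : Set (ℤ → A)} (hX : IsSofic X) : IsSubshift X := by
  obtain ⟨𝒢, hP⟩ := hX
  refine ⟨{w | ¬ InLang X w}, Set.Subset.antisymm (fun x hx w hw hwx ↦ hw ⟨x, hx, hwx⟩) ?_⟩
  intro x hx
  have words_mem (w : List A) (hw : occursIn w x) : InLang X w := by
    by_contra h
    exact hx w h hw
  suffices ∃ ξ ∈ 𝒢.G.edgeShift, ∀ i : ℤ, 𝒢.label (ξ i) = x i by
    obtain ⟨ξ, hξ, h_label⟩ := this
    exact hP.mem_iff.2 ⟨ξ, hξ, funext h_label⟩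
  refine LGraph.exists_mem_edgeShift_of_forall_window fun n ↦ ?_
  obtain ⟨y, hy, j, hj⟩ := words_mem (List.ofFn fun k : Fin (2 * n + 1) ↦ x (-n + k))
    ⟨-n, occursAt_ofFn.2 fun _ _ ↦ rfl⟩
  obtain ⟨ξ, hξ, rfl⟩ := hP.mem_iff.1 hy
  rw [occursAt_ofFn] at hj
  refine ⟨fun i ↦ ξ (i + (n + j)), FinGraph.comp_add_mem_edgeShift hξ _, fun i hi ↦ ?_⟩
  obtain ⟨k, rfl⟩ : ∃ k : ℕ, i = -n + k := ⟨(i + n).toNat, by grind⟩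
  convert hj k (by grind) using 3
  ring

/-! ## The automaton of a labeled graph -/

namespace LGraph

variable {A : Type} {𝒢 : LGraph A} {X : Set (ℤ → A)}

/-- A labeled graph as a nondeterministic automaton all of whose states are initial and accepting,
so that the words it accepts are the labels of the finite paths of the graph. -/
def toNFA (𝒢 : LGraph A) : NFA A 𝒢.G.V where
  step I a := {J | ∃ e, 𝒢.G.src e = I ∧ 𝒢.label e = a ∧ 𝒢.G.tgt e = J}
  start := Set.univ
  accept := Set.univ

/-- The follower set of a vertex: the labels of the finite paths starting there. -/
def followerSet (𝒢 : LGraph A) (I : 𝒢.G.V) : Language A := 𝒢.toNFA.acceptsFrom {I}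

theorem mem_followerSet {I : 𝒢.G.V} {w : List A} :
    w ∈ 𝒢.followerSet I ↔ (𝒢.toNFA.evalFrom {I} w).Nonempty := by
  simp [followerSet, NFA.mem_acceptsFrom, toNFA, Set.Nonempty]

theorem mem_accepts_toNFA {w : List A} :
    w ∈ 𝒢.toNFA.accepts ↔ ∃ I, w ∈ 𝒢.followerSet I := by
  simp only [mem_followerSet, Set.Nonempty, NFA.mem_accepts,
    NFA.mem_evalFrom_iff_exists (S := 𝒢.toNFA.start)]
  simp only [toNFA, Set.mem_univ, true_and]
  exact exists_comm

theorem nil_mem_followerSet (I : 𝒢.G.V) : [] ∈ 𝒢.followerSet I :=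
  mem_followerSet.2 ⟨I, rfl⟩

theorem cons_mem_followerSet {I : 𝒢.G.V} {a : A} {w : List A} :
    a :: w ∈ 𝒢.followerSet I ↔
      ∃ e, 𝒢.G.src e = I ∧ 𝒢.label e = a ∧ w ∈ 𝒢.followerSet (𝒢.G.tgt e) := by
  simp only [mem_followerSet, NFA.evalFrom_cons, NFA.stepSet_singleton, Set.Nonempty]
  simp only [NFA.mem_evalFrom_iff_exists (S := 𝒢.toNFA.step _ _)]
  constructor
  · rintro ⟨K, -, ⟨e, h_src, h_label, rfl⟩, hK⟩
    exact ⟨e, h_src, h_label, K, hK⟩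
  · rintro ⟨e, h_src, h_label, K, hK⟩
    exact ⟨K, _, ⟨e, h_src, h_label, rfl⟩, hK⟩

theorem src_mem_evalFrom_of_occursAt {ξ : ℤ → 𝒢.G.E} (hξ : ξ ∈ 𝒢.G.edgeShift) {w : List A} {i : ℤ}
    (hw : occursAt w (fun j ↦ 𝒢.label (ξ j)) i) :
    𝒢.G.src (ξ (i + w.length)) ∈ 𝒢.toNFA.evalFrom {𝒢.G.src (ξ i)} w := by
  induction w generalizing i with
  | nil => simp
  | cons a w ih =>
    obtain ⟨h_label, hw⟩ := occursAt_cons.1 hw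
    rw [NFA.evalFrom_cons, NFA.stepSet_singleton, NFA.mem_evalFrom_iff_exists]
    refine ⟨𝒢.G.src (ξ (i + 1)), ⟨ξ i, rfl, h_label, hξ i⟩, ?_⟩
    convert ih hw using 3
    rw [List.length_cons]
    push_cast
    ring

theorem exists_mem_edgeShift_of_mem_followerSet (hG : 𝒢.G.Essential) {I : 𝒢.G.V} {w : List A}
    (hw : w ∈ 𝒢.followerSet I) :
    ∃ ξ ∈ 𝒢.G.edgeShift, 𝒢.G.src (ξ 0) = I ∧ occursAt w (fun j ↦ 𝒢.label (ξ j)) 0 := by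
  induction w generalizing I with
  | nil =>
    obtain ⟨e, rfl⟩ := hG.1 I
    obtain ⟨ξ, hξ, rfl⟩ := hG.exists_mem_edgeShift_apply_zero e
    exact ⟨ξ, hξ, rfl, occursAt_nil _ _⟩
  | cons a w ih =>
    obtain ⟨e, rfl, rfl, hw_tgt⟩ := cons_mem_followerSet.1 hw
    obtain ⟨ξ, hξ, rfl⟩ := hG.exists_mem_edgeShift_apply_zero e
    obtain ⟨η, hη, h_src, h_occurs⟩ := ih hw_tgt
    refine ⟨_, FinGraph.splice_mem_edgeShift hξ (FinGraph.comp_add_mem_edgeShift hη (-1)) ?_,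
      ?_, ?_⟩
    · simpa using h_src.symm
    · simp
    · refine occursAt_cons.2 ⟨by simp, fun k hk ↦ ?_⟩
      have h_index : ¬ (0 + 1 + k : ℤ) ≤ 0 ∧ (0 + 1 + k + -1 : ℤ) = 0 + k := by lia
      simpa only [if_neg h_index.1, h_index.2] using h_occurs k hk

theorem Presents.inLang_iff_mem_accepts (hP : 𝒢.Presents X) (hG : 𝒢.G.Essential) {w : List A} :
    InLang X w ↔ w ∈ 𝒢.toNFA.accepts := by
  rw [mem_accepts_toNFA]
  constructor
  · rintro ⟨x, hx, i, hw⟩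
    obtain ⟨ξ, hξ, rfl⟩ := hP.mem_iff.1 hx
    exact ⟨_, mem_followerSet.2 ⟨_, src_mem_evalFrom_of_occursAt hξ hw⟩⟩
  · rintro ⟨I, hw⟩
    obtain ⟨ξ, hξ, -, hw⟩ := exists_mem_edgeShift_of_mem_followerSet hG hw
    exact ⟨_, hP.mem_iff.2 ⟨ξ, hξ, rfl⟩, 0, hw⟩

theorem Presents.eq_of_accepts_eq {ℋ : LGraph A} {Y : Set (ℤ → A)} (h𝒢 : 𝒢.Presents X)
    (hℋ : ℋ.Presents Y) (h𝒢_ess : 𝒢.G.Essential) (hℋ_ess : ℋ.G.Essential)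
    (h : 𝒢.toNFA.accepts = ℋ.toNFA.accepts) : X = Y :=
  IsSubshift.eq_of_inLang_iff (IsSofic.isSubshift ⟨𝒢, h𝒢⟩) (IsSofic.isSubshift ⟨ℋ, hℋ⟩) fun _ ↦ by
    rw [h𝒢.inLang_iff_mem_accepts h𝒢_ess, hℋ.inLang_iff_mem_accepts hℋ_ess, h]

/-! ## Merging vertices with equal follower sets -/

theorem RightResolving.followerSet_tgt (hR : 𝒢.RightResolving) (e : 𝒢.G.E) :
    𝒢.followerSet (𝒢.G.tgt e) = (𝒢.followerSet (𝒢.G.src e)).leftQuotient [𝒢.label e] := by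
  ext w
  rw [Language.mem_leftQuotient, List.singleton_append, cons_mem_followerSet]
  constructor
  · exact fun hw ↦ ⟨e, rfl, rfl, hw⟩
  · rintro ⟨f, h_src, h_label, hw⟩
    rwa [← hR f e h_src h_label]

/-- The merged graph of a right-resolving labeled graph: vertices with the same follower set are
identified. It is encoded with the follower sets themselves as vertices; an edge is a pair of a
follower set `F` and a label `a` readable from it, and leads to the left quotient of `F` by `a`. -/
noncomputable def followerGraph (𝒢 : LGraph A) (hR : 𝒢.RightResolving) : LGraph A where
  G :=
    { V := Set.range 𝒢.followerSet
      E := Set.range fun e ↦ (𝒢.followerSet (𝒢.G.src e), 𝒢.label e)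
      fintypeV := Fintype.ofFinite _
      fintypeE := Fintype.ofFinite _
      src := fun p ↦ ⟨p.1.1, by obtain ⟨_, e, rfl⟩ := p; exact ⟨_, rfl⟩⟩
      tgt := fun p ↦ ⟨p.1.1.leftQuotient [p.1.2], by
        obtain ⟨_, e, rfl⟩ := p; exact ⟨_, hR.followerSet_tgt e⟩⟩ }
  label p := p.1.2

theorem followerGraph_rightResolving (hR : 𝒢.RightResolving) :
    (𝒢.followerGraph hR).RightResolving := fun _ _ h_src h_label ↦
  Subtype.ext (Prod.ext (congrArg Subtype.val h_src) h_label)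

theorem followerGraph_essential (hR : 𝒢.RightResolving) (hG : 𝒢.G.Essential) :
    (𝒢.followerGraph hR).G.Essential := by
  constructor
  · rintro ⟨_, I, rfl⟩
    obtain ⟨e, rfl⟩ := hG.1 I
    exact ⟨⟨_, e, rfl⟩, rfl⟩
  · rintro ⟨_, I, rfl⟩
    obtain ⟨e, rfl⟩ := hG.2 I
    exact ⟨⟨_, e, rfl⟩, Subtype.ext (hR.followerSet_tgt e).symm⟩

theorem followerSet_followerGraph (hR : 𝒢.RightResolving)
    (F : (𝒢.followerGraph hR).G.V) : (𝒢.followerGraph hR).followerSet F = F.1 := by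
  ext w
  induction w generalizing F with
  | nil =>
    obtain ⟨_, I, rfl⟩ := F
    exact iff_of_true (nil_mem_followerSet _) (nil_mem_followerSet I)
  | cons a w ih =>
    rw [cons_mem_followerSet]
    constructor
    · rintro ⟨p, rfl, rfl, hw⟩
      exact (ih _).1 hw
    · obtain ⟨_, I, rfl⟩ := F
      intro hw
      obtain ⟨e, rfl, rfl, -⟩ := cons_mem_followerSet.1 hw
      exact ⟨⟨_, e, rfl⟩, rfl, rfl, (ih _).2 hw⟩

theorem accepts_followerGraph (hR : 𝒢.RightResolving) :
    (𝒢.followerGraph hR).toNFA.accepts = 𝒢.toNFA.accepts := by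
  ext w
  simp only [mem_accepts_toNFA]
  constructor
  · rintro ⟨⟨_, I, rfl⟩, hw⟩
    exact ⟨I, (followerSet_followerGraph hR _).le hw⟩
  · rintro ⟨I, hw⟩
    exact ⟨⟨_, I, rfl⟩, (followerSet_followerGraph hR _).ge hw⟩

theorem Presents.followerGraph (hP : 𝒢.Presents X) (hG : 𝒢.G.Essential)
    (hR : 𝒢.RightResolving) : (𝒢.followerGraph hR).Presents X :=
  hP.eq_of_accepts_eq rfl hG (followerGraph_essential hR hG) (accepts_followerGraph hR).symm

theorem followerSet_injective_of_card_le (hR : 𝒢.RightResolving)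
    (h_card : Fintype.card 𝒢.G.V ≤ Fintype.card (𝒢.followerGraph hR).G.V) :
    Function.Injective 𝒢.followerSet := by
  have h_card' : Nat.card 𝒢.G.V ≤ Nat.card (𝒢.followerGraph hR).G.V := by
    simpa only [Nat.card_eq_fintype_card] using h_card
  have : Function.Bijective (Set.rangeFactorization 𝒢.followerSet) :=
    Set.rangeFactorization_surjective.bijective_of_nat_card_le h_card'
  exact Set.rangeFactorization_injective.1 this.injective

/-! ## Synchronizing words -/

theorem RightResolving.eq_of_mem_step (hR : 𝒢.RightResolving) {I J K : 𝒢.G.V} {a : A}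
    (hJ : J ∈ 𝒢.toNFA.step I a) (hK : K ∈ 𝒢.toNFA.step I a) : J = K := by
  obtain ⟨e, rfl, rfl, rfl⟩ := hJ
  obtain ⟨f, h_src, h_label, rfl⟩ := hK
  rw [hR f e h_src h_label]

theorem RightResolving.ncard_evalFrom_le (hR : 𝒢.RightResolving) (S : Set 𝒢.G.V) (w : List A) :
    (𝒢.toNFA.evalFrom S w).ncard ≤ S.ncard := by
  induction w generalizing S with
  | nil => rfl
  | cons a w ih =>
    have ncard_stepSet_le : (𝒢.toNFA.stepSet S a).ncard ≤ S.ncard := by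
      have exists_mem_step (J) (hJ : J ∈ 𝒢.toNFA.stepSet S a) : ∃ I ∈ S, J ∈ 𝒢.toNFA.step I a :=
        NFA.mem_stepSet.1 hJ
      choose! pred pred_mem mem_step using exists_mem_step
      exact Set.ncard_le_ncard_of_injOn pred pred_mem fun J hJ K hK h ↦
        hR.eq_of_mem_step (mem_step J hJ) (h ▸ mem_step K hK)
    exact (ih _).trans ncard_stepSet_le

theorem RightResolving.ncard_evalFrom_lt (hR : 𝒢.RightResolving) {S : Set 𝒢.G.V} {I : 𝒢.G.V}
    (hI : I ∈ S) {w : List A} (hw : w ∉ 𝒢.followerSet I) :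
    (𝒢.toNFA.evalFrom S w).ncard < S.ncard := by
  rw [mem_followerSet, Set.not_nonempty_iff_eq_empty] at hw
  calc (𝒢.toNFA.evalFrom S w).ncard
      = (𝒢.toNFA.evalFrom (S \ {I}) w).ncard := by
        conv_lhs => rw [← Set.sdiff_union_of_subset (Set.singleton_subset_iff.2 hI),
          NFA.evalFrom_union, hw, Set.union_empty]
    _ ≤ (S \ {I}).ncard := hR.ncard_evalFrom_le _ _
    _ < S.ncard := Set.ncard_sdiff_singleton_lt_of_mem hI

-- If `w` has the fewest terminal vertices among the words that label a path, then it cannot be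
-- extended by a word that only some of these vertices can read.
theorem RightResolving.exists_eval_eq_singleton [Nonempty 𝒢.G.V] (hR : 𝒢.RightResolving)
    (h_inj : Function.Injective 𝒢.followerSet) : ∃ w J, 𝒢.toNFA.eval w = {J} := by
  obtain ⟨w, hw, h_min⟩ := exists_minimalFor_of_wellFoundedLT (fun w ↦ (𝒢.toNFA.eval w).Nonempty)
    (fun w ↦ (𝒢.toNFA.eval w).ncard) ⟨[], Set.univ_nonempty⟩
  have followerSet_subset {J K} (hJ : J ∈ 𝒢.toNFA.eval w) (hK : K ∈ 𝒢.toNFA.eval w) :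
      𝒢.followerSet J ≤ 𝒢.followerSet K := by
    intro u huJ
    by_contra huK
    have eval_append : 𝒢.toNFA.eval (w ++ u) = 𝒢.toNFA.evalFrom (𝒢.toNFA.eval w) u :=
      𝒢.toNFA.evalFrom_append _ w u
    have h_lt : (𝒢.toNFA.eval (w ++ u)).ncard < (𝒢.toNFA.eval w).ncard :=
      eval_append ▸ hR.ncard_evalFrom_lt hK huK
    have h_nonempty : (𝒢.toNFA.eval (w ++ u)).Nonempty := by
      obtain ⟨L, hL⟩ := mem_followerSet.1 huJ
      exact ⟨L, eval_append ▸ NFA.mem_evalFrom_iff_exists.2 ⟨J, hJ, hL⟩⟩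
    exact h_lt.not_ge (h_min h_nonempty h_lt.le)
  obtain ⟨J, hJ⟩ := hw
  exact ⟨w, J, Set.eq_singleton_iff_unique_mem.2
    ⟨hJ, fun K hK ↦ h_inj ((followerSet_subset hK hJ).antisymm (followerSet_subset hJ hK))⟩⟩

theorem Presents.oneOneAE (hP : 𝒢.Presents X) (hG : 𝒢.G.Essential) (hR : 𝒢.RightResolving)
    (h_inj : Function.Injective 𝒢.followerSet) :
    OneOneAE 𝒢.G.edgeShift X (fun ξ i ↦ 𝒢.label (ξ i)) := by
  intro x hx h_trans
  obtain ⟨ξ, hξ, rfl⟩ := hP.mem_iff.1 hx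
  refine ⟨ξ, ⟨hξ, rfl⟩, fun η ⟨hη, h_label⟩ ↦ funext fun i ↦ ?_⟩
  replace h_label : (fun i ↦ 𝒢.label (η i)) = fun i ↦ 𝒢.label (ξ i) := h_label
  have : Nonempty 𝒢.G.V := ⟨𝒢.G.src (ξ 0)⟩
  obtain ⟨w, J, h_sync⟩ := hR.exists_eval_eq_singleton h_inj
  have hw : InLang X w :=
    (hP.inLang_iff_mem_accepts hG).2 ⟨J, Set.mem_univ J, h_sync.ge rfl⟩
  obtain ⟨j, hj, h_occurs⟩ := (h_trans w hw).2 (i - w.length)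
  have src_eq {ζ : ℤ → 𝒢.G.E} (hζ : ζ ∈ 𝒢.G.edgeShift)
      (h : occursAt w (fun i ↦ 𝒢.label (ζ i)) j) : 𝒢.G.src (ζ (j + w.length)) = J :=
    h_sync.le (NFA.mem_evalFrom_iff_exists.2
      ⟨_, Set.mem_univ _, src_mem_evalFrom_of_occursAt hζ h⟩)
  have h_src := (src_eq hη (h_label ▸ h_occurs)).trans (src_eq hξ h_occurs).symm
  exact hR.eq_of_src_eq hη hξ h_src (fun k _ ↦ congrFun h_label k) i (by lia)

end LGraph

theorem IsFischerCover.oneOneAE {A : Type} {𝒢 : LGraph A} {X : Set (ℤ → A)}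
    (h𝒢 : IsFischerCover 𝒢 X) : OneOneAE 𝒢.G.edgeShift X (fun ξ i ↦ 𝒢.label (ξ i)) := by
  obtain ⟨h_irred, hR, hP, h_min⟩ := h𝒢
  intro x hx
  obtain ⟨ξ, -, -⟩ := hP.mem_iff.1 hx
  have : Nonempty 𝒢.G.E := ⟨ξ 0⟩
  have hG : 𝒢.G.Essential := h_irred.essential
  have h_card := h_min _ (LGraph.followerGraph_rightResolving hR) (hP.followerGraph hG hR)
  exact hP.oneOneAE hG hR (LGraph.followerSet_injective_of_card_le hR h_card) x hx

/-! ## Transport along graph isomorphisms -/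

section GraphIso

variable {B : Type} {G H : FinGraph}

theorem GraphIso.src_emap_symm (iso : GraphIso G H) (e : H.E) :
    G.src (iso.emap.symm e) = iso.vmap.symm (H.src e) := by
  rw [Equiv.eq_symm_apply, ← iso.src_eq, Equiv.apply_symm_apply]

theorem GraphIso.tgt_emap_symm (iso : GraphIso G H) (e : H.E) :
    G.tgt (iso.emap.symm e) = iso.vmap.symm (H.tgt e) := by
  rw [Equiv.eq_symm_apply, ← iso.tgt_eq, Equiv.apply_symm_apply]

theorem GraphIso.irreducible (iso : GraphIso G H) (hH : H.Irreducible) : G.Irreducible := by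
  intro I J
  have h_lift := (hH (iso.vmap I) (iso.vmap J)).lift (p := fun u v ↦ ∃ e, G.src e = u ∧ G.tgt e = v)
    iso.vmap.symm fun _ _ ⟨e, h_src, h_tgt⟩ ↦
      ⟨iso.emap.symm e, h_src ▸ iso.src_emap_symm e, h_tgt ▸ iso.tgt_emap_symm e⟩
  simpa only [Function.onFun, Equiv.symm_apply_apply] using h_lift

/-- The labeling of `𝒢` pulled back to a graph isomorphic to its underlying graph. -/
def LGraph.pullback (𝒢 : LGraph B) (iso : GraphIso G 𝒢.G) : LGraph B where
  G := G
  label e := 𝒢.label (iso.emap e)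

variable {𝒢 : LGraph B} {Y : Set (ℤ → B)}

theorem LGraph.RightResolving.pullback (hR : 𝒢.RightResolving) (iso : GraphIso G 𝒢.G) :
    (𝒢.pullback iso).RightResolving := fun e f h_src h_label ↦
  iso.emap.injective <| hR _ _
    ((iso.src_eq e).trans ((congrArg iso.vmap h_src).trans (iso.src_eq f).symm)) h_label

theorem LGraph.Presents.pullback (hP : 𝒢.Presents Y) (iso : GraphIso G 𝒢.G) :
    (𝒢.pullback iso).Presents Y := by
  ext y
  rw [hP.mem_iff]
  constructor
  · rintro ⟨ξ, hξ, rfl⟩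
    refine ⟨fun i ↦ iso.emap.symm (ξ i), fun i ↦ ?_, fun i ↦ ?_⟩
    · exact (iso.tgt_emap_symm _).trans (hξ i ▸ (iso.src_emap_symm _).symm)
    · exact congrArg 𝒢.label (iso.emap.apply_symm_apply (ξ i))
  · rintro ⟨ξ, hξ, h_label⟩
    refine ⟨fun i ↦ iso.emap (ξ i), fun i ↦ ?_, funext h_label⟩
    exact (iso.tgt_eq _).trans ((congrArg iso.vmap (hξ i)).trans (iso.src_eq _).symm)

theorem IsFischerCover.pullback (h𝒢 : IsFischerCover 𝒢 Y) (iso : GraphIso G 𝒢.G) :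
    IsFischerCover (𝒢.pullback iso) Y := by
  obtain ⟨h_irred, hR, hP, h_min⟩ := h𝒢
  refine ⟨iso.irreducible h_irred, hR.pullback iso, hP.pullback iso, fun ℋ hℋR hℋP ↦ ?_⟩
  exact (Fintype.card_congr iso.vmap).le.trans (h_min ℋ hℋR hℋP)

end GraphIso

/-- If `X` and `Y` are irreducible sofic shifts whose Fischer covers
have graph-isomorphic underlying graphs, then `X` and `Y` are right-resolving almost
conjugate; a common SFT extension is the edge shift `X_{G_X}` with legs `(ℒ_X)_∞`
and `(ℒ_Y)_∞` composed with the graph isomorphism. -/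
theorem fischer_graph_iso_implies_rr_almost_conjugate
    {A B : Type} (X : Set (ℤ → A)) (Y : Set (ℤ → B))
    (hXi : IrreducibleShift X) (hYi : IrreducibleShift Y)
    (hXs : IsSofic X) (hYs : IsSofic Y)
    (𝒢X : LGraph A) (𝒢Y : LGraph B)
    (hFX : IsFischerCover 𝒢X X) (hFY : IsFischerCover 𝒢Y Y)
    (iso : GraphIso 𝒢X.G 𝒢Y.G) :
    RRAlmostConjugate X Y ∧
    IsSFT 𝒢X.G.edgeShift ∧
    IsFactorCode 𝒢X.G.edgeShift X (fun ξ i => 𝒢X.label (ξ i)) ∧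
    IsFactorCode 𝒢X.G.edgeShift Y (fun ξ i => 𝒢Y.label (iso.emap (ξ i))) ∧
    IsRightResolvingCode 𝒢X.G.edgeShift (fun ξ i => 𝒢X.label (ξ i)) ∧
    IsRightResolvingCode 𝒢X.G.edgeShift (fun ξ i => 𝒢Y.label (iso.emap (ξ i))) ∧
    OneOneAE 𝒢X.G.edgeShift X (fun ξ i => 𝒢X.label (ξ i)) ∧
    OneOneAE 𝒢X.G.edgeShift Y (fun ξ i => 𝒢Y.label (iso.emap (ξ i))) := by
  have hFY' : IsFischerCover (𝒢Y.pullback iso) Y := hFY.pullback iso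
  have ⟨_, hRX, hPX, _⟩ := hFX
  have ⟨_, hRY, hPY, _⟩ := hFY'
  have h_sft := 𝒢X.G.isSFT_edgeShift
  have h_legs := And.intro hPX.isFactorCode <| And.intro hPY.isFactorCode <|
    And.intro hRX.isRightResolvingCode <| And.intro hRY.isRightResolvingCode <|
    And.intro hFX.oneOneAE hFY'.oneOneAE
  exact ⟨⟨𝒢X.G.E, inferInstance, 𝒢X.G.edgeShift, _, _, h_sft, h_legs⟩, h_sft, h_legs⟩
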